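/- Let ℓ ≥ 1 and let α_1,…,α_ℓ ∈ L \ {0} have pairwise distinct norms such that {N_{L/K}(α_1),…,N_{L/K}(α_ℓ)} is a multiplicative subgroup of K \ {0} of cardinality ℓ. For f ∈ L^{ℓn} let wt(f) := Σ_{j=1}^{ℓ}(n − dim_K ker F_{α_j}), where F_α(β) := Σ_{i=0}^{ℓn−1} f_i·N_i(α)·θ^i(β). Let C ⊆ L^{ℓn} be a K-linear subspace and 1 ≤ d ≤ ℓn be such that every nonzero f ∈ C satisfies wt(f) ≥ d and dim_K(C) = n·(ℓn − d + 1) (i.e. C is a maximum sum-rank distance code). Let C^⊥ := {g ∈ L^{ℓn} : Tr_{L/K}(Σ_{i=0}^{ℓn−1} f_i·g_i) = 0 for all f ∈ C}. Then dim_K(C^⊥) = n·(d − 1) and every nonzero g ∈ C^⊥ satisfies wt(g) ≥ ℓn − d + 2; that is, C^⊥ is a maximum sum-rank distance code. -/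

import Mathlib

/-!
The dimension of `C^⊥` follows from nondegeneracy of the form `Tr_{L/K}(∑ f_i g_i)`.

For the distance, write `F_a` for the evaluation of `f` at `a`, and let `G_j^†` be the adjoint of
`G_{α_j}` for the trace form of `L/K`; its range lies in `W_j = (ker G_{α_j})^⊥`, whose dimension
is the rank of `G_{α_j}`. The key fact (`dot_eq_zero`) is that if `F_{α_j⁻¹} ∘ G_j^† = 0` for all
`j`, then `∑ f_i g_i = 0`: Dedekind's theorem gives the vanishing of the coefficient of the identity
in each composite, and summing over `j` all terms but `ℓ ∑ f_i g_i` are power sums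
`∑_j N(α_j)^t` with `ℓ ∤ t`, which vanish because the norms form a group of order `ℓ`. For the same
reason `ℓ` is invertible.

Suppose that `g ∈ C^⊥` has weight at most `ℓn - d + 1`. Enlarge the `W_j` to `U_j` with total
dimension exactly `ℓn - d + 1`, and let `X` be the space of all `f` such that `F_{α_j⁻¹}` kills
`U_j` for every `j`. By counting equations, `dim_K X ≥ n(d - 1)`. Since the norms are closed under
inversion, Hilbert 90 makes each `F_{α_j⁻¹}` conjugate to some `F_{α_{j'}}`, so elements of `X`
have weight at most `d - 1` and `C ∩ X = 0`. Thus `C + X` is the whole space by dimension, while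
`g` is orthogonal to `C` by assumption and to `X` by the key fact; hence `g = 0`.
-/

noncomputable section

open Finset

variable {K L : Type*} [Field K] [Field L] [Algebra K L]

/-- The `i`-th truncated norm `N_i(y) = ∏_{j=0}^{i-1} θ^j(y)`. -/
def trunorm (θ : L ≃ₐ[K] L) (i : ℕ) (y : L) : L :=
  ∏ j ∈ Finset.range i, (θ ^ j) y

/-- The trace `Tr_{L/K}(x) = ∑_{i=0}^{n-1} θ^i(x)` (as an element of `L`). -/
def TrL (θ : L ≃ₐ[K] L) (n : ℕ) (x : L) : L :=
  ∑ i ∈ Finset.range n, (θ ^ i) x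

/-- The map sending a coefficient tuple `f ∈ L^{ℓn}` to `(F_{α_1}, …, F_{α_ℓ})`,
where `F_α(β) = ∑_{i<ℓn} f_i·N_i(α)·θ^i(β)`. -/
def PhiMap (n ℓ : ℕ) (θ : L ≃ₐ[K] L) (α : Fin ℓ → L) (f : Fin (ℓ * n) → L) :
    Fin ℓ → L →ₗ[K] L :=
  fun j => ∑ i : Fin (ℓ * n), (f i * trunorm θ (i : ℕ) (α j)) • (θ ^ (i : ℕ)).toLinearMap

/-! ### Truncated norms and the cyclic Galois group -/

theorem trunorm_add (θ : L ≃ₐ[K] L) (i k : ℕ) (y : L) :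
    trunorm θ (i + k) y = trunorm θ i y * (θ ^ i) (trunorm θ k y) := by
  simp only [trunorm, Finset.prod_range_add, map_prod, pow_add, AlgEquiv.mul_apply]

theorem trunorm_mul (θ : L ≃ₐ[K] L) (i : ℕ) (x y : L) :
    trunorm θ i (x * y) = trunorm θ i x * trunorm θ i y := by
  simp [trunorm, Finset.prod_mul_distrib]

theorem trunorm_inv (θ : L ≃ₐ[K] L) (i : ℕ) (x : L) :
    trunorm θ i x⁻¹ = (trunorm θ i x)⁻¹ := by
  simp [trunorm]

theorem trunorm_ne_zero (θ : L ≃ₐ[K] L) (i : ℕ) {x : L} (hx : x ≠ 0) : trunorm θ i x ≠ 0 :=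
  Finset.prod_ne_zero_iff.2 fun j _ => (map_ne_zero (θ ^ j)).2 hx

theorem trunorm_div_coboundary (θ : L ≃ₐ[K] L) (i : ℕ) {c : L} (hc : c ≠ 0) :
    trunorm θ i (c / θ c) = c / (θ ^ i) c := by
  induction i with
  | zero => simp [trunorm, hc]
  | succ i ih =>
    rw [trunorm_add, ih]
    have h1 : (θ ^ i) c ≠ 0 := (map_ne_zero _).2 hc
    have h2 : (θ ^ (i + 1)) c = (θ ^ i) (θ c) := by rw [pow_succ, AlgEquiv.mul_apply]
    have h3 : (θ ^ i) (θ c) ≠ 0 := (map_ne_zero _).2 ((map_ne_zero _).2 hc)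
    simp only [trunorm, Finset.prod_range_one, pow_zero, AlgEquiv.one_apply, map_div₀, h2]
    field_simp

/-- The automorphisms of `L/K` are linearly independent over `L` (Dedekind). -/
theorem linearIndependent_gal :
    LinearIndependent L (fun σ : L ≃ₐ[K] L => σ.toLinearMap) :=
  (linearIndependent_toLinearMap K L L).comp (fun σ : L ≃ₐ[K] L => (σ : L →ₐ[K] L))
    fun σ τ h => by ext x; exact DFunLike.congr_fun h x

section Cyclic

variable [FiniteDimensional K L]

theorem orderOf_eq_finrank [IsGalois K L] (θ : L ≃ₐ[K] L)
    (hgen : ∀ σ : L ≃ₐ[K] L, σ ∈ Subgroup.zpowers θ) :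
    orderOf θ = Module.finrank K L := by
  rw [orderOf_eq_card_of_forall_mem_zpowers hgen, IsGalois.card_aut_eq_finrank]

theorem image_pow_range [IsGalois K L] [DecidableEq (L ≃ₐ[K] L)] (θ : L ≃ₐ[K] L)
    (hgen : ∀ σ : L ≃ₐ[K] L, σ ∈ Subgroup.zpowers θ) :
    (Finset.range (Module.finrank K L)).image (fun i => θ ^ i) = Finset.univ := by
  rw [← orderOf_eq_finrank θ hgen]
  exact IsCyclic.image_range_orderOf hgen

theorem pow_injOn_range [IsGalois K L] (θ : L ≃ₐ[K] L)
    (hgen : ∀ σ : L ≃ₐ[K] L, σ ∈ Subgroup.zpowers θ) :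
    Set.InjOn (fun i : ℕ => θ ^ i) (Finset.range (Module.finrank K L)) := by
  rw [← orderOf_eq_finrank θ hgen]
  intro i hi j hj h
  exact pow_injOn_Iio_orderOf (by simpa using hi) (by simpa using hj) h

theorem trunorm_eq_norm [IsGalois K L] (θ : L ≃ₐ[K] L)
    (hgen : ∀ σ : L ≃ₐ[K] L, σ ∈ Subgroup.zpowers θ) (x : L) :
    trunorm θ (Module.finrank K L) x = algebraMap K L (Algebra.norm K x) := by
  classical
  rw [Algebra.norm_eq_prod_automorphisms, ← image_pow_range θ hgen,
    Finset.prod_image (pow_injOn_range θ hgen)]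
  rfl

theorem TrL_eq_trace [IsGalois K L] (θ : L ≃ₐ[K] L)
    (hgen : ∀ σ : L ≃ₐ[K] L, σ ∈ Subgroup.zpowers θ) (x : L) :
    TrL θ (Module.finrank K L) x = algebraMap K L (Algebra.trace K L x) := by
  classical
  rw [trace_eq_sum_automorphisms, ← image_pow_range θ hgen,
    Finset.sum_image (pow_injOn_range θ hgen)]
  rfl

theorem trunorm_add_mul [IsGalois K L] (θ : L ≃ₐ[K] L)
    (hgen : ∀ σ : L ≃ₐ[K] L, σ ∈ Subgroup.zpowers θ) (i t : ℕ) (x : L) :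
    trunorm θ (i + Module.finrank K L * t) x =
      trunorm θ i x * trunorm θ (Module.finrank K L) x ^ t := by
  induction t with
  | zero => simp
  | succ t ih =>
    rw [mul_add, mul_one, ← add_assoc, trunorm_add, ih, trunorm_eq_norm θ hgen,
      AlgEquiv.commutes, pow_succ, mul_assoc]

/-- Hilbert 90. Mathlib's `groupCohomology.exists_div_of_norm_eq_one` requires `K` and `L` to live
in `Type`, so it is reproved here: the element `c = ∑_{i<n} N_i(x) θ^i(z)` satisfies `x θ(c) = c`,
and by Dedekind it is nonzero for some `z`. -/
theorem exists_coboundary [IsGalois K L] (θ : L ≃ₐ[K] L)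
    (hgen : ∀ σ : L ≃ₐ[K] L, σ ∈ Subgroup.zpowers θ) (x : L)
    (hx : trunorm θ (Module.finrank K L) x = 1) : ∃ c : L, c ≠ 0 ∧ c / θ c = x := by
  have hpos : 0 < Module.finrank K L := Module.finrank_pos
  obtain ⟨z, hz⟩ : ∃ z, ∑ i ∈ Finset.range (Module.finrank K L), trunorm θ i x * (θ ^ i) z ≠ 0 := by
    by_contra! h
    have hli := linearIndependent_gal (K := K) (L := L).comp
      (fun i : Finset.range (Module.finrank K L) => θ ^ (i : ℕ))
      (fun i j hij => Subtype.ext (pow_injOn_range θ hgen i.2 j.2 hij))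
    rw [Fintype.linearIndependent_iff] at hli
    have := hli (fun i => trunorm θ i x) (by
      ext z
      refine Eq.trans ?_ (h z)
      rw [← Finset.sum_coe_sort (Finset.range _) fun i => trunorm θ i x * (θ ^ i) z]
      simp only [LinearMap.sum_apply]
      rfl) ⟨0, by simpa using hpos⟩
    simp [trunorm] at this
  refine ⟨_, hz, ?_⟩
  rw [div_eq_iff ((map_ne_zero θ).2 hz)]
  have hstep : ∀ i, x * θ (trunorm θ i x * (θ ^ i) z) = trunorm θ (i + 1) x * (θ ^ (i + 1)) z := by
    intro i
    rw [add_comm i 1, trunorm_add, pow_add, AlgEquiv.mul_apply, map_mul]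
    simp [trunorm, mul_assoc]
  rw [map_sum, Finset.mul_sum, Finset.sum_congr rfl fun i _ => hstep i]
  -- the two sums differ by a cyclic shift: the terms of index `0` and `n` coincide
  have h1 := Finset.sum_range_succ (fun i => trunorm θ i x * (θ ^ i) z) (Module.finrank K L)
  rw [Finset.sum_range_succ'] at h1
  rw [hx, ← orderOf_eq_finrank θ hgen, pow_orderOf_eq_one] at h1
  rw [← orderOf_eq_finrank θ hgen]
  simpa [trunorm] using h1.symm

end Cyclic

/-! ### Power sums over a finite multiplicative subgroup, and enlarging subspaces -/

/-- If the distinct values `lam j` form a subgroup `Λ` of `Fˣ` of order `ℓ`, then `Λ` is cyclic,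
so `F` contains a primitive `ℓ`-th root of unity; hence `ℓ` is invertible in `F`, and the power
sums of exponent `0 < t < ℓ` over `Λ` vanish, being sums of a nontrivial character. -/
theorem powerSum_subgroup {F : Type*} [Field F] {ℓ : ℕ} (hl : 1 ≤ ℓ) (lam : Fin ℓ → F)
    (h0 : ∀ j, lam j ≠ 0) (hinj : Function.Injective lam)
    (hone : ∃ j, lam j = 1)
    (hmul : ∀ j j', ∃ j'', lam j * lam j' = lam j'')
    (hinv : ∀ j, ∃ j', lam j * lam j' = 1) :
    (ℓ : F) ≠ 0 ∧ (∀ j, lam j ^ ℓ = 1) ∧ ∀ t, 0 < t → t < ℓ → ∑ j, lam j ^ t = 0 := by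
  classical
  let G : Subgroup Fˣ :=
    { carrier := {u | ∃ j, lam j = u}
      one_mem' := by simpa using hone
      mul_mem' := by
        rintro a b ⟨j, hj⟩ ⟨j', hj'⟩
        obtain ⟨j'', h⟩ := hmul j j'
        exact ⟨j'', by rw [← h, hj, hj', Units.val_mul]⟩
      inv_mem' := by
        rintro a ⟨j, hj⟩
        obtain ⟨j', h⟩ := hinv j
        refine ⟨j', ?_⟩
        rw [Units.val_inv_eq_inv_val, ← hj]
        exact eq_inv_of_mul_eq_one_right h }
  let e : Fin ℓ ≃ G := Equiv.ofBijective
    (fun j => ⟨Units.mk0 (lam j) (h0 j), ⟨j, rfl⟩⟩)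
    ⟨fun i j h => hinj (by simpa using h), fun ⟨u, j, hj⟩ => ⟨j, by
      apply Subtype.ext; apply Units.ext; exact hj⟩⟩
  let : Fintype G := Fintype.ofEquiv _ e
  have hcard : Nat.card G = ℓ := by rw [← Nat.card_congr e]; simp
  have hcard' : Fintype.card G = ℓ := by rw [← Nat.card_eq_fintype_card]; exact hcard
  have he : ∀ j, ((e j : Fˣ) : F) = lam j := fun j => rfl
  obtain ⟨z, hz⟩ := IsCyclic.exists_generator (α := G)
  have hord : orderOf z = ℓ := by rw [orderOf_eq_card_of_forall_mem_zpowers hz, hcard]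
  have hprim : IsPrimitiveRoot ((z : Fˣ) : F) ℓ := by
    rw [IsPrimitiveRoot.coe_units_iff, IsPrimitiveRoot.coe_submonoidClass_iff, ← hord]
    exact IsPrimitiveRoot.orderOf z
  have : NeZero ℓ := ⟨by omega⟩
  refine ⟨hprim.neZero'.out, fun j => ?_, fun t ht0 ht => ?_⟩
  · have := pow_card_eq_one (x := e j)
    rw [hcard'] at this
    rw [← he, ← Units.val_pow_eq_pow_val, ← Subgroup.coe_pow, this]; simp
  · let φ : G →* F := ((Units.coeHom F).comp G.subtype).comp (powMonoidHom t)
    have hφ : φ ≠ 1 := fun h => by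
      have h1 : φ z = 1 := by rw [h]; rfl
      have h2 : ((z : Fˣ) : F) ^ t = 1 := by simpa [φ] using h1
      exact hprim.pow_ne_one_of_pos_of_lt ht0.ne' ht h2
    have := sum_hom_units_eq_zero φ hφ
    rw [← Equiv.sum_comp e] at this
    simpa [φ, he] using this

/-- A family of subspaces of `V` can be enlarged so that the dimensions add up to any prescribed
number between their current total and `ℓ * dim V`. -/
theorem exists_enlarge {V : Type*} [AddCommGroup V] [Module K V] [FiniteDimensional K V]
    {ℓ : ℕ} (W : Fin ℓ → Submodule K V) (m : ℕ)
    (hm : ∑ j, Module.finrank K (W j) ≤ m) (hm' : m ≤ ℓ * Module.finrank K V) :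
    ∃ U : Fin ℓ → Submodule K V, (∀ j, W j ≤ U j) ∧ ∑ j, Module.finrank K (U j) = m := by
  induction m, hm using Nat.le_induction with
  | base => exact ⟨W, fun _ => le_rfl, rfl⟩
  | succ m hm ih =>
    obtain ⟨U, hWU, hU⟩ := ih (by omega)
    obtain ⟨j, hj⟩ : ∃ j, U j ≠ ⊤ := by
      by_contra! h
      have hfr : ∀ j, Module.finrank K (U j) = Module.finrank K V := fun j => by
        rw [h j, finrank_top]
      simp only [hfr, Finset.sum_const, Finset.card_univ, Fintype.card_fin, smul_eq_mul] at hU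
      omega
    obtain ⟨x, -, hx⟩ := SetLike.exists_of_lt (lt_top_iff_ne_top.mpr hj)
    refine ⟨Function.update U j (U j ⊔ Submodule.span K {x}), fun i => ?_, ?_⟩
    · by_cases h : i = j
      · subst h; simpa using (hWU i).trans le_sup_left
      · simpa [h] using hWU i
    · have key : Module.finrank K ↥(U j ⊔ Submodule.span K {x}) = Module.finrank K (U j) + 1 := by
        have h1 := Submodule.finrank_sup_add_finrank_inf_eq (U j) (Submodule.span K {x})
        have h2 : U j ⊓ Submodule.span K {x} = ⊥ := by
          rw [← disjoint_iff]
          exact (Submodule.disjoint_span_singleton' (by rintro rfl; exact hx (zero_mem _))).2 hx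
        rw [h2, finrank_bot, finrank_span_singleton (by rintro rfl; exact hx (zero_mem _))] at h1
        omega
      rw [← hU, ← Finset.add_sum_erase _ _ (Finset.mem_univ j),
        ← Finset.add_sum_erase _ (fun i => Module.finrank K (U i)) (Finset.mem_univ j)]
      rw [Function.update_self, key, Finset.sum_congr rfl (g := fun i => Module.finrank K (U i))]
      · omega
      · intro i hi
        rw [Function.update_of_ne (Finset.ne_of_mem_erase hi)]

/-! ### The adjoint evaluation and the trace form -/

section Orthogonality

theorem PhiMap_apply (n ℓ : ℕ) (θ : L ≃ₐ[K] L) (α : Fin ℓ → L) (f : Fin (ℓ * n) → L)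
    (j : Fin ℓ) (β : L) :
    PhiMap n ℓ θ α f j β = ∑ i : Fin (ℓ * n), f i * trunorm θ i (α j) * (θ ^ (i : ℕ)) β := by
  simp only [PhiMap, LinearMap.sum_apply, LinearMap.smul_apply, AlgEquiv.toLinearMap_apply,
    smul_eq_mul]

/-- The adjoint, for the trace form of `L/K`, of `β ↦ ∑_k g_k N_k(a) θ^k(β)`. In the skew polynomial
ring it is the evaluation at `a⁻¹` of the image of `g` under the anti-automorphism `x ↦ x⁻¹`. -/
def adjEval (n ℓ : ℕ) (θ : L ≃ₐ[K] L) (a : L) (g : Fin (ℓ * n) → L) (γ : L) : L :=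
  ∑ k : Fin (ℓ * n), (θ ^ (k : ℕ))⁻¹ (g k * trunorm θ k a * γ)

theorem trace_mul_adjEval [IsGalois K L] (n ℓ : ℕ) (θ : L ≃ₐ[K] L) (α : Fin ℓ → L)
    (g : Fin (ℓ * n) → L) (j : Fin ℓ) (β γ : L) :
    Algebra.trace K L (β * adjEval n ℓ θ (α j) g γ) =
      Algebra.trace K L (PhiMap n ℓ θ α g j β * γ) := by
  rw [PhiMap_apply, adjEval, Finset.mul_sum, Finset.sum_mul, map_sum, map_sum]
  refine Finset.sum_congr rfl fun k _ => ?_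
  rw [← Algebra.trace_eq_of_algEquiv (θ ^ (k : ℕ)), map_mul, ← AlgEquiv.mul_apply, mul_inv_cancel,
    AlgEquiv.one_apply]
  congr 1
  ring

/-- The `K`-bilinear form `(f, g) ↦ Tr_{L/K}(∑ f_i g_i)` on `L^ι`. -/
def dotForm (K L ι : Type*) [Fintype ι] [Field K] [Field L] [Algebra K L] :
    LinearMap.BilinForm K (ι → L) :=
  LinearMap.mk₂ K (fun f g => Algebra.trace K L (∑ i, f i * g i))
    (fun f f' g => by simp [add_mul, Finset.sum_add_distrib])
    (fun c f g => by simp [← Finset.smul_sum])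
    (fun f g g' => by simp [mul_add, Finset.sum_add_distrib])
    (fun c f g => by simp [← Finset.smul_sum])

theorem dotForm_apply {ι : Type*} [Fintype ι] (f g : ι → L) :
    dotForm K L ι f g = Algebra.trace K L (∑ i, f i * g i) := rfl

variable [FiniteDimensional K L]

/-- If `F_{α⁻¹}` vanishes on the range of the adjoint of `G_α`, then expanding the composite as a
combination of the automorphisms `θ^i θ^{-k}`, Dedekind's theorem makes every coefficient vanish.
This is the coefficient of the identity. -/
theorem coeff_one_eq_zero [IsGalois K L] [DecidableEq (L ≃ₐ[K] L)] (n ℓ : ℕ) (θ : L ≃ₐ[K] L)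
    (α : Fin ℓ → L) (f g : Fin (ℓ * n) → L) (j : Fin ℓ)
    (h : ∀ γ, PhiMap n ℓ θ (fun j => (α j)⁻¹) f j (adjEval n ℓ θ (α j) g γ) = 0) :
    ∑ p : Fin (ℓ * n) × Fin (ℓ * n), (if θ ^ (p.1 : ℕ) = θ ^ (p.2 : ℕ) then
      f p.1 * g p.2 * (trunorm θ p.2 (α j) / trunorm θ p.1 (α j)) else 0) = 0 := by
  let s : Fin (ℓ * n) × Fin (ℓ * n) → (L ≃ₐ[K] L) := fun p => θ ^ (p.1 : ℕ) * (θ ^ (p.2 : ℕ))⁻¹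
  let c : Fin (ℓ * n) × Fin (ℓ * n) → L := fun p =>
    f p.1 * trunorm θ p.1 (α j)⁻¹ * s p (g p.2 * trunorm θ p.2 (α j))
  have hli := linearIndependent_gal (K := K) (L := L)
  rw [Fintype.linearIndependent_iff] at hli
  have h1 := hli (fun σ => ∑ p, if s p = σ then c p else 0) (by
    ext γ
    refine Eq.trans ?_ (h γ)
    simp only [Finset.sum_smul, ite_smul, zero_smul]
    rw [Finset.sum_comm]
    simp only [Finset.sum_ite_eq, Finset.mem_univ, if_true, LinearMap.sum_apply,
      LinearMap.smul_apply, AlgEquiv.toLinearMap_apply, smul_eq_mul]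
    rw [PhiMap_apply, Fintype.sum_prod_type]
    refine Finset.sum_congr rfl fun i _ => ?_
    rw [adjEval, map_sum, Finset.mul_sum]
    refine Finset.sum_congr rfl fun k _ => ?_
    simp only [c, s, AlgEquiv.mul_apply, map_mul]
    ring) 1
  refine Eq.trans (Finset.sum_congr rfl fun p _ => ?_) h1
  have hs : s p = 1 ↔ θ ^ (p.1 : ℕ) = θ ^ (p.2 : ℕ) := mul_inv_eq_one
  by_cases hp : θ ^ (p.1 : ℕ) = θ ^ (p.2 : ℕ)
  · rw [if_pos hp, if_pos (hs.2 hp)]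
    simp only [c, hs.2 hp, AlgEquiv.one_apply, trunorm_inv]
    ring
  · rw [if_neg hp, if_neg (mt hs.1 hp)]

/-- When `θ^i = θ^k`, the ratio `N_k(α)/N_i(α)` is the power `λ^t` of the norm `λ` of `α`, where
`k - i = n t` and `|t| < ℓ`; for `i ≠ k` this is a vanishing power sum over the group of norms. -/
theorem sum_ratio [IsGalois K L] {ℓ : ℕ} (θ : L ≃ₐ[K] L)
    (hgen : ∀ σ : L ≃ₐ[K] L, σ ∈ Subgroup.zpowers θ)
    (α : Fin ℓ → L) (hα0 : ∀ j, α j ≠ 0)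
    (hpow : ∀ j, trunorm θ (Module.finrank K L) (α j) ^ ℓ = 1)
    (hsum : ∀ t, 0 < t → t < ℓ → ∑ j, trunorm θ (Module.finrank K L) (α j) ^ t = 0)
    (i k : ℕ) (hi : i < ℓ * Module.finrank K L) (hk : k < ℓ * Module.finrank K L)
    (hne : i ≠ k) (hik : θ ^ i = θ ^ k) :
    ∑ j, trunorm θ k (α j) / trunorm θ i (α j) = 0 := by
  rw [pow_eq_pow_iff_modEq, orderOf_eq_finrank θ hgen] at hik
  rcases lt_or_gt_of_ne hne with hlt | hlt
  · obtain ⟨t, ht⟩ := (Nat.modEq_iff_dvd' hlt.le).1 hik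
    obtain rfl : k = i + Module.finrank K L * t := by omega
    rw [← hsum t (Nat.pos_of_ne_zero (by rintro rfl; simp at hlt))
      (lt_of_mul_lt_mul_left (a := Module.finrank K L) (by rw [mul_comm _ ℓ]; omega) (Nat.zero_le _))]
    refine Finset.sum_congr rfl fun j _ => ?_
    rw [trunorm_add_mul θ hgen, mul_div_cancel_left₀ _ (trunorm_ne_zero θ i (hα0 j))]
  · obtain ⟨t, ht⟩ := (Nat.modEq_iff_dvd' hlt.le).1 hik.symm
    obtain rfl : i = k + Module.finrank K L * t := by omega
    have ht0 : 0 < t := Nat.pos_of_ne_zero (by rintro rfl; simp at hlt)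
    have htl : t < ℓ := lt_of_mul_lt_mul_left (a := Module.finrank K L)
      (by rw [mul_comm _ ℓ]; omega) (Nat.zero_le _)
    rw [← hsum (ℓ - t) (by omega) (by omega)]
    refine Finset.sum_congr rfl fun j _ => ?_
    have h0 := trunorm_ne_zero θ k (hα0 j)
    have h1 := trunorm_ne_zero θ (Module.finrank K L) (hα0 j)
    rw [trunorm_add_mul θ hgen, div_eq_iff (mul_ne_zero h0 (pow_ne_zero _ h1)), mul_left_comm,
      ← pow_add, Nat.sub_add_cancel htl.le, hpow, mul_one]

/-- If for every `j` the evaluation of `f` at `(α j)⁻¹` kills the range of the adjoint of the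
evaluation of `g` at `α j`, then `∑ f_i g_i = 0`: summing the identity coefficients over `j` leaves
`ℓ * ∑ f_i g_i`. -/
theorem dot_eq_zero [IsGalois K L] {n ℓ : ℕ} (hn : Module.finrank K L = n) (θ : L ≃ₐ[K] L)
    (hgen : ∀ σ : L ≃ₐ[K] L, σ ∈ Subgroup.zpowers θ)
    (α : Fin ℓ → L) (hα0 : ∀ j, α j ≠ 0) (hl0 : (ℓ : L) ≠ 0)
    (hpow : ∀ j, trunorm θ n (α j) ^ ℓ = 1)
    (hsum : ∀ t, 0 < t → t < ℓ → ∑ j, trunorm θ n (α j) ^ t = 0)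
    (f g : Fin (ℓ * n) → L)
    (h : ∀ j γ, PhiMap n ℓ θ (fun j => (α j)⁻¹) f j (adjEval n ℓ θ (α j) g γ) = 0) :
    ∑ i, f i * g i = 0 := by
  subst hn
  classical
  have h1 : ∑ j, _ = (0 : L) := Finset.sum_eq_zero fun j (_ : j ∈ Finset.univ) =>
    coeff_one_eq_zero _ ℓ θ α f g j (h j)
  rw [Finset.sum_comm] at h1
  have h2 : ∀ p : Fin (ℓ * Module.finrank K L) × Fin (ℓ * Module.finrank K L),
      (∑ j : Fin ℓ, if θ ^ (p.1 : ℕ) = θ ^ (p.2 : ℕ) then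
        f p.1 * g p.2 * (trunorm θ p.2 (α j) / trunorm θ p.1 (α j)) else 0) =
      if p.1 = p.2 then ℓ * (f p.1 * g p.2) else 0 := by
    rintro ⟨i, k⟩
    dsimp only
    by_cases hik : i = k
    · subst hik
      simp [div_self (trunorm_ne_zero θ _ (hα0 _))]
    · rw [if_neg hik]
      by_cases hθ : θ ^ (i : ℕ) = θ ^ (k : ℕ)
      · simp only [if_pos hθ]
        rw [← Finset.mul_sum, sum_ratio θ hgen α hα0 hpow hsum i k i.2 k.2
          (fun e => hik (Fin.ext e)) hθ, mul_zero]
      · simp [hθ]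
  rw [Finset.sum_congr rfl fun p _ => h2 p, Fintype.sum_prod_type] at h1
  simp only [Finset.sum_ite_eq, Finset.mem_univ, if_true, ← Finset.mul_sum] at h1
  exact (mul_eq_zero.1 h1).resolve_left hl0

theorem dotForm_nondegenerate [IsGalois K L] {ι : Type*} [Fintype ι] :
    (dotForm K L ι).Nondegenerate := by
  classical
  have hl : ∀ f : ι → L, (∀ g, dotForm K L ι f g = 0) → f = 0 := fun f hf => by
    funext i
    refine (traceForm_nondegenerate K L).1 _ fun y => ?_
    simpa [dotForm_apply, Pi.single_apply, Algebra.traceForm_apply] using hf (Pi.single i y)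
  refine ⟨hl, fun g hg => hl g fun f => ?_⟩
  rw [← hg f, dotForm_apply, dotForm_apply]
  simp only [mul_comm]

/-- When `α j * α j' = c / θ c`, evaluation at `α j'` and evaluation at `(α j)⁻¹` are conjugate
under multiplication by `c`, so a subspace killed by the latter has a copy killed by the former. -/
theorem finrank_le_ker_of_norm_mul [IsGalois K L] (n ℓ : ℕ) (θ : L ≃ₐ[K] L) (α : Fin ℓ → L)
    (hα0 : ∀ j, α j ≠ 0) (f : Fin (ℓ * n) → L) (j j' : Fin ℓ) {c : L} (hc : c ≠ 0)
    (hcj : c / θ c = α j * α j') (U : Submodule K L)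
    (hU : U ≤ LinearMap.ker (PhiMap n ℓ θ (fun j => (α j)⁻¹) f j)) :
    Module.finrank K U ≤ Module.finrank K (LinearMap.ker (PhiMap n ℓ θ α f j')) := by
  have hker : ∀ u ∈ U, LinearMap.mulLeft K c u ∈ LinearMap.ker (PhiMap n ℓ θ α f j') := by
    intro u hu
    have hu0 := hU hu
    rw [LinearMap.mem_ker, PhiMap_apply] at hu0 ⊢
    rw [← mul_zero c, ← hu0, Finset.mul_sum]
    refine Finset.sum_congr rfl fun i _ => ?_
    have h1 : trunorm θ i (α j) * trunorm θ i (α j') = c / (θ ^ (i : ℕ)) c := by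
      rw [← trunorm_mul, ← hcj, trunorm_div_coboundary θ i hc]
    have h2 : (θ ^ (i : ℕ)) c ≠ 0 := (map_ne_zero _).2 hc
    have h3 := trunorm_ne_zero θ i (hα0 j)
    rw [eq_div_iff h2] at h1
    rw [LinearMap.mulLeft_apply, map_mul, trunorm_inv]
    field_simp
    linear_combination f i * (θ ^ (i : ℕ)) u * h1
  exact LinearMap.finrank_le_finrank_of_injective
    (f := (LinearMap.mulLeft K c).restrict hker) fun x y hxy => by
      exact Subtype.ext (mul_left_cancel₀ hc (congrArg Subtype.val hxy))

end Orthogonality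

/-! ### Duality of maximum sum-rank distance codes -/

theorem stmt_12 (n ℓ : ℕ) (hn1 : 1 ≤ n) (hl1 : 1 ≤ ℓ)
    [IsGalois K L] [FiniteDimensional K L]
    (hn : Module.finrank K L = n) (θ : L ≃ₐ[K] L)
    (hgen : ∀ σ : L ≃ₐ[K] L, σ ∈ Subgroup.zpowers θ)
    (α : Fin ℓ → L) (hα0 : ∀ j, α j ≠ 0)
    (hdist : Function.Injective fun j => trunorm θ n (α j))
    -- `Λ = {N_{L/K}(α_j)}` is a multiplicative subgroup of `K \ {0}` of cardinality `ℓ`: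
    (hone : ∃ j, trunorm θ n (α j) = 1)
    (hmul : ∀ j j', ∃ j'', trunorm θ n (α j) * trunorm θ n (α j') = trunorm θ n (α j''))
    (hinv : ∀ j, ∃ j', trunorm θ n (α j) * trunorm θ n (α j') = 1)
    (C : Submodule K (Fin (ℓ * n) → L)) (d : ℕ) (hd1 : 1 ≤ d) (hd2 : d ≤ ℓ * n)
    (hwt : ∀ f ∈ C, f ≠ (0 : Fin (ℓ * n) → L) →
      d ≤ ∑ j : Fin ℓ, (n - Module.finrank K ↥(LinearMap.ker (PhiMap n ℓ θ α f j))))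
    (hdim : Module.finrank K ↥C = n * (ℓ * n - d + 1))
    (D : Submodule K (Fin (ℓ * n) → L))
    (hD : ∀ g, g ∈ D ↔ ∀ f ∈ C, TrL θ n (∑ i : Fin (ℓ * n), f i * g i) = 0) :
    Module.finrank K ↥D = n * (d - 1) ∧
      ∀ g ∈ D, g ≠ (0 : Fin (ℓ * n) → L) →
        ℓ * n - d + 2
          ≤ ∑ j : Fin ℓ, (n - Module.finrank K ↥(LinearMap.ker (PhiMap n ℓ θ α g j))) := by
  obtain ⟨hl0, hpow, hsum⟩ := powerSum_subgroup hl1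
    (fun j => trunorm θ n (α j)) (fun j => trunorm_ne_zero θ _ (hα0 j))
    hdist hone hmul hinv
  have hTr : ∀ x, TrL θ n x = algebraMap K L (Algebra.trace K L x) := hn ▸ TrL_eq_trace θ hgen
  have hH90 : ∀ x, trunorm θ n x = 1 → ∃ c : L, c ≠ 0 ∧ c / θ c = x :=
    hn ▸ exists_coboundary θ hgen
  have hDorth : D = (dotForm K L (Fin (ℓ * n))).orthogonal C := by
    ext g
    rw [hD, LinearMap.BilinForm.mem_orthogonal_iff]
    refine forall₂_congr fun f _ => ?_
    rw [dotForm_apply, hTr, map_eq_zero_iff _ (algebraMap K L).injective]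
  have htot : Module.finrank K (Fin (ℓ * n) → L) = n * (ℓ * n) := by
    rw [Module.finrank_pi_fintype, Finset.sum_const, Finset.card_univ, Fintype.card_fin,
      smul_eq_mul, hn, mul_comm]
  have hsplit : n * (ℓ * n) = n * (ℓ * n - d + 1) + n * (d - 1) := by
    rw [← mul_add]
    congr 1
    omega
  refine ⟨?_, fun g hg hg0 => ?_⟩
  · rw [hDorth, LinearMap.BilinForm.finrank_orthogonal dotForm_nondegenerate, htot, hdim, hsplit,
      Nat.add_sub_cancel_left]
  by_contra! hlt
  apply hg0
  -- `W j` contains the range of the adjoint of `G_j` and has dimension `rank G_j`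
  let W : Fin ℓ → Submodule K L := fun j =>
    (Algebra.traceForm K L).orthogonal (LinearMap.ker (PhiMap n ℓ θ α g j))
  have hW : ∀ j, Module.finrank K (W j) =
      n - Module.finrank K (LinearMap.ker (PhiMap n ℓ θ α g j)) := fun j => by
    rw [LinearMap.BilinForm.finrank_orthogonal (traceForm_nondegenerate K L), hn]
  have hadj : ∀ j γ, adjEval n ℓ θ (α j) g γ ∈ W j := fun j γ => by
    rw [LinearMap.BilinForm.mem_orthogonal_iff]
    intro β hβ
    rw [Algebra.traceForm_apply, trace_mul_adjEval,
      LinearMap.mem_ker.1 hβ, zero_mul, map_zero]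
  obtain ⟨U, hWU, hU⟩ := exists_enlarge W (ℓ * n - d + 1)
    (by rw [Finset.sum_congr rfl fun j _ => hW j]; omega) (by rw [hn]; omega)
  -- the kernel of `T` is the space of all `f` whose evaluations at the `(α j)⁻¹` vanish on the `U j`
  let T : (Fin (ℓ * n) → L) →ₗ[K] ((j : Fin ℓ) → U j →ₗ[K] L) :=
    { toFun := fun f j => (PhiMap n ℓ θ (fun j => (α j)⁻¹) f j).domRestrict (U j)
      map_add' := fun f f' => by
        ext j x
        simp [PhiMap_apply, add_mul, Finset.sum_add_distrib]
      map_smul' := fun c f => by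
        ext j x
        simp [PhiMap_apply, Finset.smul_sum] }
  have hT : ∀ f ∈ LinearMap.ker T, ∀ j,
      U j ≤ LinearMap.ker (PhiMap n ℓ θ (fun j => (α j)⁻¹) f j) := fun f hf j x hx =>
    LinearMap.mem_ker.2 <| DFunLike.congr_fun (congrFun (LinearMap.mem_ker.1 hf) j) ⟨x, hx⟩
  have hXdim : n * (d - 1) ≤ Module.finrank K (LinearMap.ker T) := by
    have h1 := LinearMap.finrank_range_add_finrank_ker T
    have h2 := Submodule.finrank_le (LinearMap.range T)
    have h3 : Module.finrank K ((j : Fin ℓ) → U j →ₗ[K] L) = n * (ℓ * n - d + 1) := by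
      rw [Module.finrank_pi_fintype]
      simp only [Module.finrank_linearMap]
      rw [← Finset.sum_mul, hU, hn, mul_comm]
    omega
  have hXC : C ⊓ LinearMap.ker T = ⊥ := by
    rw [eq_bot_iff]
    rintro f ⟨hfC, hfX⟩
    by_contra hf0
    have hw := hwt f hfC hf0
    -- `s` inverts the norms; it permutes the indices because the norms form a group
    choose s hs using hinv
    have hsinj : Function.Injective s := fun i j hij => by
      have h1 := hs i
      rw [hij, ← hs j] at h1
      exact hdist (mul_right_cancel₀ (trunorm_ne_zero θ _ (hα0 _)) h1)
    have hle : ∀ j, Module.finrank K (U j) ≤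
        Module.finrank K (LinearMap.ker (PhiMap n ℓ θ α f (s j))) := fun j => by
      obtain ⟨c, hc, hcj⟩ := hH90 (α j * α (s j)) (by rw [trunorm_mul]; exact hs j)
      exact finrank_le_ker_of_norm_mul n ℓ θ α hα0 f j (s j) hc hcj (U j) (hT f hfX j)
    have hbij : Function.Bijective s := Finite.injective_iff_bijective.1 hsinj
    rw [← hbij.sum_comp] at hw
    have h1 : (∑ j, (n - Module.finrank K (LinearMap.ker (PhiMap n ℓ θ α f (s j))))) +
        ∑ j, Module.finrank K (U j) ≤ ∑ _j : Fin ℓ, n := by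
      rw [← Finset.sum_add_distrib]
      refine Finset.sum_le_sum fun j _ => ?_
      have h2 := hle j
      have h3 := Submodule.finrank_le (LinearMap.ker (PhiMap n ℓ θ α f (s j)))
      rw [hn] at h3
      omega
    rw [hU, Finset.sum_const, Finset.card_univ, Fintype.card_fin, smul_eq_mul] at h1
    omega
  have hsup : C ⊔ LinearMap.ker T = ⊤ := by
    apply Submodule.eq_top_of_finrank_eq
    refine le_antisymm (Submodule.finrank_le _) ?_
    have h1 := Submodule.finrank_sup_add_finrank_inf_eq C (LinearMap.ker T)
    rw [hXC, finrank_bot] at h1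
    omega
  refine (dotForm_nondegenerate (K := K)).2 g fun f => ?_
  obtain ⟨x, hx, y, hy, rfl⟩ := Submodule.mem_sup.1
    (hsup ▸ Submodule.mem_top : f ∈ C ⊔ LinearMap.ker T)
  rw [map_add, LinearMap.add_apply]
  have hx0 : dotForm K L _ x g = 0 := by
    rw [hDorth] at hg
    exact hg x hx
  have hy0 : dotForm K L _ y g = 0 := by
    rw [dotForm_apply, dot_eq_zero hn θ hgen α hα0 hl0 hpow hsum y g fun j γ =>
      hT y hy j (hWU j (hadj j γ)), map_zero]
  rw [hx0, hy0, add_zero]
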